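/- arXiv:1703.06447 — 3 statements merged into one kernel-verified Lean document; each statement's English description precedes it below -/
import Mathlib

section
/- Let S be a Borel subset of a Polish space, let K be a bounded linear operator mapping C_b(S) into itself which is non-negative and such that K^k is a compact operator for some integer k ≥ 1, and let μ be a Borel probability measure on S satisfying μ(U) > 0 for every nonempty open subset U of S. Then (∫_S (K^n 𝟙)(x) μ(dx))^(1/n) converges, as n → ∞, to the spectral radius λ(K), where 𝟙 denotes the constant function equal to 1; equivalently, ∫_S K^n 𝟙 dμ = λ(K)^(n+o(n)). -/
open Filter MeasureTheory BoundedContinuousFunction Topology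

section helpers

variable {T : Type*} [TopologicalSpace T]

lemma pex_root_const {c : ℝ} (hc : 0 < c) :
    Tendsto (fun n : ℕ => c ^ (1 / (n : ℝ))) atTop (𝓝 1) := by
  have h : Tendsto (fun n : ℕ => 1 / (n : ℝ)) atTop (𝓝 0) := tendsto_one_div_atTop_nhds_zero_nat
  have h2 := ((Real.continuous_const_rpow hc.ne').tendsto 0).comp h
  rw [Real.rpow_zero] at h2
  exact h2

lemma pex_root_pow_mul {a c : ℝ} (ha : 0 ≤ a) (hc : 0 < c) :
    Tendsto (fun n : ℕ => (a ^ n * c) ^ (1 / (n : ℝ))) atTop (𝓝 a) := by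
  have h := (pex_root_const hc).const_mul a
  rw [mul_one] at h
  refine h.congr' ?_
  filter_upwards [eventually_ge_atTop 1] with n hn
  rw [Real.mul_rpow (by positivity) hc.le, one_div, Real.pow_rpow_inv_natCast ha (by omega)]

lemma pex_pow_nonneg (K : (T →ᵇ ℝ) →L[ℝ] (T →ᵇ ℝ))
    (hpos : ∀ g : T →ᵇ ℝ, (∀ x, 0 ≤ g x) → ∀ x, 0 ≤ (K g) x) (n : ℕ) :
    ∀ g : T →ᵇ ℝ, (∀ x, 0 ≤ g x) → ∀ x, 0 ≤ ((K ^ n) g) x := by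
  induction n with
  | zero => intro g hg x; simpa using hg x
  | succ n ih =>
    intro g hg x
    rw [pow_succ]
    exact ih (K g) (hpos g hg) x

lemma pex_mono (L : (T →ᵇ ℝ) →L[ℝ] (T →ᵇ ℝ))
    (hpos : ∀ g : T →ᵇ ℝ, (∀ x, 0 ≤ g x) → ∀ x, 0 ≤ (L g) x)
    (f g : T →ᵇ ℝ) (h : ∀ x, f x ≤ g x) (x : T) : L f x ≤ L g x := by
  have := hpos (g - f) (fun x => by simpa using h x) x
  simpa using this

lemma pex_norm_le (L : (T →ᵇ ℝ) →L[ℝ] (T →ᵇ ℝ))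
    (hpos : ∀ g : T →ᵇ ℝ, (∀ x, 0 ≤ g x) → ∀ x, 0 ≤ (L g) x)
    (C : ℝ) (hC : 0 ≤ C) (h : ∀ x, L 1 x ≤ C) : ‖L‖ ≤ C := by
  refine L.opNorm_le_bound hC fun g => ?_
  refine (BoundedContinuousFunction.norm_le (by positivity)).2 fun x => ?_
  have hb : ∀ y, |g y| ≤ ‖g‖ := fun y => g.norm_coe_le_norm y
  have h1 := pex_mono L hpos g (‖g‖ • (1 : T →ᵇ ℝ))
    (fun y => by simpa using (abs_le.1 (hb y)).2) x
  have h2 := pex_mono L hpos (-(‖g‖ • (1 : T →ᵇ ℝ))) g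
    (fun y => by simpa using (abs_le.1 (hb y)).1) x
  simp only [map_neg, map_smul, BoundedContinuousFunction.coe_neg, Pi.neg_apply,
    BoundedContinuousFunction.coe_smul, smul_eq_mul] at h1 h2
  have h3 := mul_le_mul_of_nonneg_left (h x) (norm_nonneg g)
  rw [Real.norm_eq_abs, abs_le]
  constructor <;> linarith

/-- If `x ≥ 1` and `K x ≤ s x` then the spectral radius is at most `s`. -/
lemma pex_lam_le [Nonempty T] (K : (T →ᵇ ℝ) →L[ℝ] (T →ᵇ ℝ))
    (hpos : ∀ g : T →ᵇ ℝ, (∀ x, 0 ≤ g x) → ∀ x, 0 ≤ (K g) x) (lam : ℝ)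
    (hlam : Tendsto (fun n : ℕ => ‖K ^ n‖ ^ (1 / (n : ℝ))) atTop (𝓝 lam))
    (f : T →ᵇ ℝ) (hf : ∀ x, 1 ≤ f x) (s : ℝ) (hs : 0 ≤ s)
    (hK : ∀ x, K f x ≤ s * f x) : lam ≤ s := by
  have hfpos : 0 < ‖f‖ := by
    obtain ⟨p⟩ := ‹Nonempty T›
    have := f.norm_coe_le_norm p
    have h2 := le_abs_self (f p)
    rw [Real.norm_eq_abs] at this
    linarith [hf p]
  have key : ∀ n : ℕ, ∀ x, (K ^ n) f x ≤ s ^ n * f x := by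
    intro n
    induction n with
    | zero => intro x; simp
    | succ n ih =>
      intro x
      have h1 := pex_mono (K ^ n) (pex_pow_nonneg K hpos n) (K f) (s • f)
        (fun y => by simpa using hK y) x
      have h2 := mul_le_mul_of_nonneg_left (ih x) hs
      rw [pow_succ K]
      change (K ^ n) (K f) x ≤ _
      simp only [map_smul, BoundedContinuousFunction.coe_smul, smul_eq_mul] at h1
      rw [pow_succ s]
      linarith
  have hn : ∀ n : ℕ, ‖K ^ n‖ ≤ s ^ n * ‖f‖ := by
    intro n
    refine pex_norm_le _ (pex_pow_nonneg K hpos n) _ (by positivity) fun x => ?_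
    have h1 := pex_mono (K ^ n) (pex_pow_nonneg K hpos n) 1 f (fun y => by simpa using hf y) x
    have h2 : f x ≤ ‖f‖ := (le_abs_self _).trans (f.norm_coe_le_norm x)
    have h3 := mul_le_mul_of_nonneg_left h2 (pow_nonneg hs n)
    linarith [key n x]
  refine le_of_tendsto_of_tendsto' hlam (pex_root_pow_mul hs hfpos) fun n => ?_
  exact Real.rpow_le_rpow (by positivity) (hn n) (by positivity)

lemma pex_resolvent (K : (T →ᵇ ℝ) →L[ℝ] (T →ᵇ ℝ))
    (hpos : ∀ g : T →ᵇ ℝ, (∀ x, 0 ≤ g x) → ∀ x, 0 ≤ (K g) x) (lam : ℝ) (h0 : 0 < lam)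
    (hlam : Tendsto (fun n : ℕ => ‖K ^ n‖ ^ (1 / (n : ℝ))) atTop (𝓝 lam))
    (t : ℝ) (ht : lam < t) :
    ∃ f : T →ᵇ ℝ, (∀ x, 1 ≤ f x) ∧ K f = t • (f - 1) := by
  have ht0 : 0 < t := h0.trans ht
  obtain ⟨q, hq1, hq2⟩ := exists_between ht
  have hq0 : 0 < q := h0.trans hq1
  let u : ℕ → (T →ᵇ ℝ) := fun n => (t⁻¹) ^ n • (K ^ n) 1
  have hsum : Summable u := by
    refine Summable.of_norm_bounded_eventually_nat (g := fun n => (q / t) ^ n)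
      (summable_geometric_of_lt_one (by positivity) ((div_lt_one ht0).2 hq2)) ?_
    filter_upwards [hlam.eventually_lt_const hq1, eventually_ge_atTop 1] with n hn hn1
    have h1 : ‖K ^ n‖ ≤ q ^ n := by
      have := pow_le_pow_left₀ (by positivity) hn.le n
      rwa [one_div, Real.rpow_inv_natCast_pow (by positivity) (by omega)] at this
    have h2 : ‖(K ^ n) (1 : T →ᵇ ℝ)‖ ≤ q ^ n := by
      refine ((K ^ n).le_opNorm 1).trans ?_
      have h3 : ‖(1 : T →ᵇ ℝ)‖ ≤ 1 :=
        (BoundedContinuousFunction.norm_le zero_le_one).2 fun x => by simp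
      calc _ ≤ q ^ n * 1 := mul_le_mul h1 h3 (norm_nonneg _) (by positivity)
        _ = _ := mul_one _
    simp only [u, norm_smul, norm_pow, norm_inv, Real.norm_eq_abs, abs_of_pos ht0]
    rw [div_eq_inv_mul, mul_pow]
    gcongr
  have hnonneg : ∀ x, 0 ≤ (∑' n, u n) x := by
    intro x
    have := (BoundedContinuousFunction.evalCLM ℝ x : (T →ᵇ ℝ) →L[ℝ] ℝ).map_tsum hsum
    have h2 : (∑' n, u n) x = ∑' n, (u n x) := this
    rw [h2]
    refine tsum_nonneg fun n => ?_
    have := pex_pow_nonneg K hpos n 1 (fun y => by simp) x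
    simp only [u, BoundedContinuousFunction.coe_smul, smul_eq_mul]
    positivity
  have hKf : K (∑' n, u n) = t • ((∑' n, u n) - 1) := by
    rw [K.map_tsum hsum, hsum.tsum_eq_zero_add]
    have h1 : u 0 = 1 := by simp [u]
    rw [h1, add_sub_cancel_left, ← Summable.tsum_const_smul t ((summable_nat_add_iff 1).2 hsum)]
    refine tsum_congr fun n => ?_
    simp only [u, map_smul, smul_smul]
    congr 1
    · rw [pow_succ]; field_simp
    · rw [pow_succ']; rfl
  refine ⟨_, fun x => ?_, hKf⟩
  have h1 := hpos _ hnonneg x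
  rw [hKf] at h1
  simp only [BoundedContinuousFunction.coe_smul, smul_eq_mul, BoundedContinuousFunction.coe_sub,
    Pi.sub_apply, BoundedContinuousFunction.coe_one, Pi.one_apply] at h1
  have := nonneg_of_mul_nonneg_right h1 ht0
  linarith

lemma pex_approx [Nonempty T] (K : (T →ᵇ ℝ) →L[ℝ] (T →ᵇ ℝ))
    (hpos : ∀ g : T →ᵇ ℝ, (∀ x, 0 ≤ g x) → ∀ x, 0 ≤ (K g) x) (lam : ℝ) (h0 : 0 < lam)
    (hlam : Tendsto (fun n : ℕ => ‖K ^ n‖ ^ (1 / (n : ℝ))) atTop (𝓝 lam))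
    (e : ℝ) (he : 0 < e) :
    ∃ z : T →ᵇ ℝ, (∀ x, 0 ≤ z x) ∧ ‖z‖ = 1 ∧ ‖K z - lam • z‖ ≤ 2 * e := by
  obtain ⟨f, hf, hK⟩ := pex_resolvent K hpos lam h0 hlam (lam + e) (by linarith)
  set M := ‖f‖ with hM
  have hfM : ∀ x, f x ≤ M := fun x => (le_abs_self _).trans (f.norm_coe_le_norm x)
  have hM1 : 1 ≤ M := by
    obtain ⟨p⟩ := ‹Nonempty T›
    exact (hf p).trans (hfM p)
  have hM0 : 0 < M := by linarith
  have hle : lam ≤ (lam + e) * (1 - M⁻¹) := by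
    have hi : M⁻¹ ≤ 1 := inv_le_one_of_one_le₀ hM1
    refine pex_lam_le K hpos lam hlam f hf _ (mul_nonneg (by linarith) (by linarith)) fun x => ?_
    rw [hK]
    simp only [BoundedContinuousFunction.coe_smul, smul_eq_mul, BoundedContinuousFunction.coe_sub,
      Pi.sub_apply, BoundedContinuousFunction.coe_one, Pi.one_apply]
    rw [mul_assoc]
    refine mul_le_mul_of_nonneg_left ?_ (by linarith)
    have : M⁻¹ * f x ≤ 1 := by
      rw [inv_mul_le_iff₀ hM0]; linarith [hfM x]
    linarith
  refine ⟨M⁻¹ • f, fun x => ?_, ?_, ?_⟩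
  · have := hf x
    simp only [BoundedContinuousFunction.coe_smul, smul_eq_mul]
    positivity
  · rw [norm_smul, norm_inv, Real.norm_eq_abs, abs_of_pos hM0, ← hM]
    exact inv_mul_cancel₀ hM0.ne'
  · have h1 : K (M⁻¹ • f) - lam • (M⁻¹ • f) =
        e • (M⁻¹ • f) - ((lam + e) * M⁻¹) • (1 : T →ᵇ ℝ) := by
      rw [map_smul, hK]
      module
    rw [h1]
    refine (norm_sub_le _ _).trans ?_
    have h3 : ‖(1 : T →ᵇ ℝ)‖ ≤ 1 :=
        (BoundedContinuousFunction.norm_le zero_le_one).2 fun x => by simp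
    have h4 : (lam + e) * M⁻¹ ≤ e := by linarith
    have h5 : 0 ≤ (lam + e) * M⁻¹ := by positivity
    rw [norm_smul, norm_smul, norm_smul, norm_inv, Real.norm_eq_abs, Real.norm_eq_abs,
      Real.norm_eq_abs, abs_of_pos hM0, ← hM, inv_mul_cancel₀ hM0.ne', abs_of_pos he,
      abs_of_nonneg h5]
    have := mul_le_mul h4 h3 (norm_nonneg _) he.le
    linarith

lemma pex_eigen [Nonempty T] (K : (T →ᵇ ℝ) →L[ℝ] (T →ᵇ ℝ))
    (hpos : ∀ g : T →ᵇ ℝ, (∀ x, 0 ≤ g x) → ∀ x, 0 ≤ (K g) x) (lam : ℝ) (h0 : 0 < lam)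
    (hlam : Tendsto (fun n : ℕ => ‖K ^ n‖ ^ (1 / (n : ℝ))) atTop (𝓝 lam))
    (k : ℕ) (hcompact : IsCompactOperator (⇑(K ^ k))) :
    ∃ z : T →ᵇ ℝ, (∀ x, 0 ≤ z x) ∧ ‖z‖ = 1 ∧ K z = lam • z := by
  choose z hz0 hz1 hzK using fun n : ℕ =>
    pex_approx K hpos lam h0 hlam (1 / ((n : ℝ) + 1)) (by positivity)
  have hlim : Tendsto (fun n => K (z n) - lam • z n) atTop (𝓝 0) := by
    refine squeeze_zero_norm hzK ?_
    simpa using (tendsto_one_div_add_atTop_nhds_zero_nat (𝕜 := ℝ)).const_mul 2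
  have hpow : ∀ j : ℕ, Tendsto (fun n => (K ^ j) (z n) - lam ^ j • z n) atTop (𝓝 0) := by
    intro j
    induction j with
    | zero => simp
    | succ j ih =>
      have h1 := ((K.continuous.tendsto 0).comp ih).add (hlim.const_smul (lam ^ j))
      rw [map_zero, smul_zero, add_zero] at h1
      refine h1.congr fun n => ?_
      have : (K ^ (j + 1)) (z n) = K ((K ^ j) (z n)) := by rw [pow_succ']; rfl
      rw [this]
      simp only [Function.comp, map_sub, map_smul, smul_sub, smul_smul, pow_succ]
      abel
  have hc := hcompact.isCompact_closure_image_closedBall (𝕜₁ := ℝ) (𝕜₂ := ℝ) (f := ((K ^ k : (T →ᵇ ℝ) →L[ℝ] (T →ᵇ ℝ)) : (T →ᵇ ℝ) →ₗ[ℝ] (T →ᵇ ℝ))) 1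
  obtain ⟨w, -, φ, hφ, hw⟩ := hc.tendsto_subseq (x := fun n => (K ^ k) (z n))
    (fun n => subset_closure ⟨z n, by simp [hz1 n], rfl⟩)
  have hlk : lam ^ k ≠ 0 := (pow_pos h0 k).ne'
  have hzlim : Tendsto (fun n => z (φ n)) atTop (𝓝 ((lam ^ k)⁻¹ • w)) := by
    have h1 := (hw.sub ((hpow k).comp hφ.tendsto_atTop)).const_smul (lam ^ k)⁻¹
    rw [sub_zero] at h1
    refine h1.congr fun n => ?_
    simp [Function.comp, smul_smul, inv_mul_cancel₀ hlk]
  refine ⟨(lam ^ k)⁻¹ • w, fun x => ?_, ?_, ?_⟩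
  · have h2 := ((BoundedContinuousFunction.evalCLM ℝ x :
      (T →ᵇ ℝ) →L[ℝ] ℝ).continuous.tendsto _).comp hzlim
    exact ge_of_tendsto' h2 fun n => hz0 (φ n) x
  · refine tendsto_nhds_unique hzlim.norm ?_
    simp [hz1]
  · have h2 := ((K.continuous.tendsto _).comp hzlim).sub (hzlim.const_smul lam)
    exact sub_eq_zero.1 (tendsto_nhds_unique h2 (hlim.comp hφ.tendsto_atTop))

end helpers

/-- Let `S` be a Borel subset of a Polish space, let `K` be a bounded
linear operator on `C_b(S)` which is non-negative and such that `K^k` is compact for some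
`k ≥ 1`, and let `μ` be a Borel probability measure on `S` charging every nonempty open set.
Then `(∫_S (K^n 1) dμ)^(1/n)` converges to the spectral radius `λ(K)` as `n → ∞`. -/
theorem persistence_exponent_existence
    {X : Type*} [TopologicalSpace X] [PolishSpace X]
    [MeasurableSpace X] [BorelSpace X]
    (S : Set X) (hS : MeasurableSet S)
    (K : (S →ᵇ ℝ) →L[ℝ] (S →ᵇ ℝ))
    (hpos : ∀ g : S →ᵇ ℝ, (∀ x, 0 ≤ g x) → ∀ x, 0 ≤ (K g) x)
    (k : ℕ) (hk : 1 ≤ k) (hcompact : IsCompactOperator (⇑(K ^ k)))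
    (lam : ℝ)
    (hlam : Tendsto (fun n : ℕ => ‖K ^ n‖ ^ (1 / (n : ℝ))) atTop (𝓝 lam))
    (μ : Measure S) [IsProbabilityMeasure μ]
    (hμ : ∀ U : Set S, IsOpen U → U.Nonempty → 0 < μ U) :
    Tendsto (fun n : ℕ => (∫ x, ((K ^ n) (1 : S →ᵇ ℝ)) x ∂μ) ^ (1 / (n : ℝ)))
      atTop (𝓝 lam) := by
  classical
  have hne : Nonempty S := by
    by_contra h
    rw [not_nonempty_iff] at h
    have h1 := measure_univ (μ := μ)
    rw [Set.univ_eq_empty_iff.2 h, measure_empty] at h1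
    exact zero_ne_one h1
  have hint : ∀ g : S →ᵇ ℝ, Integrable (fun x => g x) μ := fun g => g.integrable μ
  have hnn : ∀ n x, 0 ≤ ((K ^ n) (1 : S →ᵇ ℝ)) x := fun n x =>
    pex_pow_nonneg K hpos n 1 (fun y => by simp) x
  have hI0 : ∀ n, 0 ≤ ∫ x, ((K ^ n) (1 : S →ᵇ ℝ)) x ∂μ := fun n => integral_nonneg (hnn n)
  have hup : ∀ n, ∫ x, ((K ^ n) (1 : S →ᵇ ℝ)) x ∂μ ≤ ‖K ^ n‖ := by
    intro n
    have h3 : ‖(1 : S →ᵇ ℝ)‖ ≤ 1 :=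
        (BoundedContinuousFunction.norm_le zero_le_one).2 fun x => by simp
    have h1 : ∀ x, ((K ^ n) (1 : S →ᵇ ℝ)) x ≤ ‖K ^ n‖ := fun x =>
      ((le_abs_self _).trans (((K ^ n) 1).norm_coe_le_norm x)).trans
        (((K ^ n).le_opNorm 1).trans (mul_le_of_le_one_right (norm_nonneg _) h3))
    calc _ ≤ ∫ _x, ‖K ^ n‖ ∂μ := integral_mono (hint _) (integrable_const _) h1
      _ = _ := by simp
  have hup' : ∀ n : ℕ, (∫ x, ((K ^ n) (1 : S →ᵇ ℝ)) x ∂μ) ^ (1 / (n : ℝ)) ≤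
      ‖K ^ n‖ ^ (1 / (n : ℝ)) := fun n =>
    Real.rpow_le_rpow (hI0 n) (hup n) (by positivity)
  have hl0 : 0 ≤ lam := ge_of_tendsto' hlam fun n => by positivity
  rcases hl0.eq_or_lt with h | h0
  · rw [← h] at hlam ⊢
    exact squeeze_zero (fun n => Real.rpow_nonneg (hI0 n) _) hup' hlam
  obtain ⟨z, hz0, hz1, hzK⟩ := pex_eigen K hpos lam h0 hlam k hcompact
  have hzp : ∀ n : ℕ, (K ^ n) z = lam ^ n • z := by
    intro n
    induction n with
    | zero => simp
    | succ n ih =>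
      have : (K ^ (n + 1)) z = (K ^ n) (K z) := by rw [pow_succ]; rfl
      rw [this, hzK, map_smul, ih, smul_smul, pow_succ']
  have hc : 0 < ∫ x, z x ∂μ := by
    rw [integral_pos_iff_support_of_nonneg hz0 (hint z)]
    refine hμ _ (isOpen_ne_fun z.continuous continuous_const) ?_
    by_contra hcon
    have hz : z = 0 := by
      ext x
      by_contra hx
      exact hcon ⟨x, hx⟩
    simp [hz] at hz1
  refine tendsto_of_tendsto_of_tendsto_of_le_of_le (pex_root_pow_mul h0.le hc) hlam
    (fun n => ?_) hup'
  refine Real.rpow_le_rpow (by positivity) ?_ (by positivity)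
  rw [← integral_const_mul]
  refine integral_mono ((hint z).const_mul _) (hint _) fun x => ?_
  have h1 := pex_mono (K ^ n) (pex_pow_nonneg K hpos n) z 1 (fun y => by
    have := (le_abs_self _).trans (z.norm_coe_le_norm y)
    rw [hz1] at this
    simpa using this) x
  rw [hzp] at h1
  simpa using h1
end

section
/- Let S be a Borel subset of a Polish space and let K be a bounded linear operator mapping C_b(S) into itself which is non-negative, such that K^k is a compact operator for some integer k ≥ 1, and whose spectral radius satisfies λ(K) > 0. Then: (i) there exists ψ ∈ C_b(S) with ψ ≥ 0 pointwise and ψ not identically 0 such that Kψ = λ(K)·ψ; (ii) every real eigenvalue t of K satisfies |t| ≤ λ(K), i.e. λ(K) is the largest eigenvalue of K; and (iii) there exists a nonzero continuous linear functional m on C_b(S) which is positive (m(f) ≥ 0 whenever f ≥ 0 pointwise) and satisfies m(Kf) = λ(K)·m(f) for all f ∈ C_b(S). -/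
open Filter MeasureTheory BoundedContinuousFunction Topology

namespace KR
variable {T : Type*} [TopologicalSpace T]

/-- pointwise positivity of an operator -/
def Pos (A : (T →ᵇ ℝ) →L[ℝ] (T →ᵇ ℝ)) : Prop := ∀ g : T →ᵇ ℝ, 0 ≤ g → 0 ≤ A g

lemma Pos.mul {A B : (T →ᵇ ℝ) →L[ℝ] (T →ᵇ ℝ)} (hA : Pos A) (hB : Pos B) : Pos (A * B) :=
  fun g hg => hA _ (hB g hg)

lemma Pos.pow {A : (T →ᵇ ℝ) →L[ℝ] (T →ᵇ ℝ)} (hA : Pos A) (n : ℕ) : Pos (A ^ n) := by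
  induction n with
  | zero => intro g hg; simpa using hg
  | succ n ih => rw [pow_succ]; exact ih.mul hA

lemma nonneg_iff (g : T →ᵇ ℝ) : 0 ≤ g ↔ ∀ x, 0 ≤ g x := Iff.rfl

lemma le_norm_smul_one (g : T →ᵇ ℝ) : g ≤ ‖g‖ • (1 : T →ᵇ ℝ) := by
  intro x
  have := g.norm_coe_le_norm x
  rw [Real.norm_eq_abs] at this
  simpa using (le_abs_self _).trans this

lemma Pos.mono {A : (T →ᵇ ℝ) →L[ℝ] (T →ᵇ ℝ)} (hA : Pos A) {f g : T →ᵇ ℝ} (h : f ≤ g) :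
    A f ≤ A g := by
  have := hA (g - f) (sub_nonneg.2 h)
  rw [map_sub] at this
  exact sub_nonneg.1 this

lemma norm_le_of_abs {f g : T →ᵇ ℝ} (h : f ≤ g) (h' : -f ≤ g) : ‖f‖ ≤ ‖g‖ := by
  rw [BoundedContinuousFunction.norm_le (norm_nonneg _)]
  intro x
  rw [Real.norm_eq_abs]
  refine (abs_le'.2 ⟨h x, h' x⟩).trans ?_
  exact (le_abs_self _).trans (g.norm_coe_le_norm x)

lemma Pos.norm_le {A : (T →ᵇ ℝ) →L[ℝ] (T →ᵇ ℝ)} (hA : Pos A) : ‖A‖ ≤ ‖A 1‖ := by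
  refine A.opNorm_le_bound (norm_nonneg _) fun g => ?_
  have h1 := hA.mono (le_norm_smul_one g)
  have h2 := hA.mono (le_norm_smul_one (-g))
  rw [map_smul] at h1 h2
  rw [map_neg, norm_neg] at h2
  refine (norm_le_of_abs h1 h2).trans ?_
  rw [norm_smul, norm_norm, mul_comm]

lemma isClosed_nonneg : IsClosed {g : T →ᵇ ℝ | 0 ≤ g} := by
  have : {g : T →ᵇ ℝ | 0 ≤ g} = ⋂ x, {g : T →ᵇ ℝ | 0 ≤ g x} := by
    ext g; simp [nonneg_iff]
  rw [this]
  exact isClosed_iInter fun x => isClosed_le continuous_const (by fun_prop)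

lemma neumannE {E : Type*} [NormedAddCommGroup E] [NormedSpace ℝ E] [CompleteSpace E]
    (A : E →L[ℝ] E) (hs : Summable fun n : ℕ => ‖A ^ n‖) :
    ∃ Q : E →L[ℝ] E, Q * (1 - A) = 1 ∧ (1 - A) * Q = 1 ∧
      ∀ g, Tendsto (fun n => ∑ i ∈ Finset.range n, (A ^ i) g) atTop (𝓝 (Q g)) := by
  have hs' : Summable fun n : ℕ => A ^ n := hs.of_norm
  refine ⟨∑' n : ℕ, A ^ n, hs'.tsum_pow_mul_one_sub, hs'.one_sub_mul_tsum_pow, fun g => ?_⟩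
  have h2 := ((ContinuousLinearMap.apply ℝ E g).continuous.tendsto _).comp
    hs'.hasSum.tendsto_sum_nat
  refine h2.congr fun n => ?_
  simp

lemma summableE {E : Type*} [NormedAddCommGroup E] [NormedSpace ℝ E]
    (K : E →L[ℝ] E) {lam s : ℝ} (h0 : 0 < lam) (hs : lam < s)
    (hlam : Tendsto (fun n : ℕ => ‖K ^ n‖ ^ (1 / (n : ℝ))) atTop (𝓝 lam)) :
    Summable fun n : ℕ => ‖(s⁻¹ • K) ^ n‖ := by
  have hs0 : 0 < s := h0.trans hs
  obtain ⟨q, hq1, hq2⟩ := exists_between hs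
  have hq0 : 0 < q := h0.trans hq1
  have hg : Summable fun n : ℕ => (q / s) ^ n :=
    summable_geometric_of_lt_one (by positivity) ((div_lt_one hs0).2 hq2)
  refine Summable.of_norm_bounded_eventually_nat hg ?_
  filter_upwards [hlam.eventually_lt_const hq1, eventually_gt_atTop 0] with n hn hn0
  have hn' : (n : ℝ) ≠ 0 := by positivity
  have : ‖K ^ n‖ ≤ q ^ n := by
    have := pow_le_pow_left₀ (by positivity) hn.le n
    rwa [← Real.rpow_natCast, ← Real.rpow_mul (norm_nonneg _), one_div_mul_cancel hn',
      Real.rpow_one] at this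
  rw [norm_norm, smul_pow, norm_smul, div_pow, norm_pow, norm_inv, Real.norm_of_nonneg hs0.le,
    inv_pow, div_eq_inv_mul]
  gcongr

lemma summableE' {E : Type*} [NormedAddCommGroup E] [NormedSpace ℝ E]
    (R : E →L[ℝ] E) {d : ℝ} (hd : 0 ≤ d) (h : d * ‖R‖ < 1) :
    Summable fun n : ℕ => ‖(d • R) ^ n‖ :=
  summable_norm_geometric_of_norm_lt_one (by rwa [norm_smul, Real.norm_of_nonneg hd])

lemma algE {A : Type*} [Ring A] [Algebra ℝ A] {K Q : A} {s : ℝ} (hs : s ≠ 0)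
    (h1 : Q * (1 - s⁻¹ • K) = 1) (h2 : (1 - s⁻¹ • K) * Q = 1) :
    (s⁻¹ • Q) * (s • 1 - K) = 1 ∧ (s • 1 - K) * (s⁻¹ • Q) = 1 := by
  have e : s • (1 : A) - K = s • (1 - s⁻¹ • K) := by
    rw [smul_sub, smul_inv_smul₀ hs]
  constructor
  · rw [e, smul_mul_smul_comm, h1, inv_mul_cancel₀ hs, one_smul]
  · rw [e, smul_mul_smul_comm, h2, mul_inv_cancel₀ hs, one_smul]

lemma algE' {A : Type*} [Ring A] [Algebra ℝ A] {K Q R : A} {s d : ℝ}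
    (h1 : R * (s • 1 - K) = 1) (h2 : (s • 1 - K) * R = 1)
    (q1 : Q * (1 - d • R) = 1) (q2 : (1 - d • R) * Q = 1) :
    (Q * R) * ((s - d) • 1 - K) = 1 ∧ ((s - d) • 1 - K) * (Q * R) = 1 := by
  have e1 : (s - d) • (1 : A) - K = (s • 1 - K) * (1 - d • R) := by
    rw [mul_sub, mul_smul_comm, h2, sub_smul, mul_one]; abel
  have e2 : (s - d) • (1 : A) - K = (1 - d • R) * (s • 1 - K) := by
    rw [sub_mul, smul_mul_assoc, h1, sub_smul, one_mul]; abel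
  constructor
  · rw [e2, mul_assoc]
    have : R * ((1 - d • R) * (s • 1 - K)) = (1 - d • R) := by
      rw [← e2, e1, ← mul_assoc, h1, one_mul]
    rw [this, q1]
  · rw [e1, mul_assoc, ← mul_assoc _ Q, q2, one_mul, h2]

lemma neumann {A : (T →ᵇ ℝ) →L[ℝ] (T →ᵇ ℝ)} (hA : Pos A)
    (hs : Summable fun n : ℕ => ‖A ^ n‖) :
    ∃ Q : (T →ᵇ ℝ) →L[ℝ] (T →ᵇ ℝ), Pos Q ∧ Q * (1 - A) = 1 ∧ (1 - A) * Q = 1 := by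
  obtain ⟨Q, h1, h2, h3⟩ := neumannE A hs
  refine ⟨Q, fun g hg => ?_, h1, h2⟩
  refine isClosed_nonneg.mem_of_tendsto (h3 g) (Eventually.of_forall fun n => ?_)
  exact Finset.sum_nonneg fun i _ => hA.pow i g hg

lemma smul_le {c : ℝ} (hc : 0 ≤ c) {f g : T →ᵇ ℝ} (h : f ≤ g) : c • f ≤ c • g :=
  fun x => mul_le_mul_of_nonneg_left (h x) hc

/-- positive resolvent -/
def Res (K : (T →ᵇ ℝ) →L[ℝ] (T →ᵇ ℝ)) (s : ℝ) (R : (T →ᵇ ℝ) →L[ℝ] (T →ᵇ ℝ)) : Prop :=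
  Pos R ∧ R * (s • 1 - K) = 1 ∧ (s • 1 - K) * R = 1

lemma Pos.smul {A : (T →ᵇ ℝ) →L[ℝ] (T →ᵇ ℝ)} (hA : Pos A) {c : ℝ} (hc : 0 ≤ c) : Pos (c • A) :=
  fun g hg x => mul_nonneg hc (hA g hg x)

lemma algF {E : Type*} [NormedAddCommGroup E] [NormedSpace ℝ E] {K Q : E →L[ℝ] E} {s : ℝ}
    (hs : s ≠ 0) (h1 : Q * (1 - s⁻¹ • K) = 1) (h2 : (1 - s⁻¹ • K) * Q = 1) :
    (s⁻¹ • Q) * (s • 1 - K) = 1 ∧ (s • 1 - K) * (s⁻¹ • Q) = 1 := algE hs h1 h2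

lemma algF' {E : Type*} [NormedAddCommGroup E] [NormedSpace ℝ E] {K Q R : E →L[ℝ] E} {s d : ℝ}
    (h1 : R * (s • 1 - K) = 1) (h2 : (s • 1 - K) * R = 1)
    (q1 : Q * (1 - d • R) = 1) (q2 : (1 - d • R) * Q = 1) :
    (Q * R) * ((s - d) • 1 - K) = 1 ∧ ((s - d) • 1 - K) * (Q * R) = 1 := algE' h1 h2 q1 q2

lemma res_gt {K : (T →ᵇ ℝ) →L[ℝ] (T →ᵇ ℝ)} (hK : Pos K) {lam : ℝ} (h0 : 0 < lam)
    (hlam : Tendsto (fun n : ℕ => ‖K ^ n‖ ^ (1 / (n : ℝ))) atTop (𝓝 lam)) {s : ℝ} (hs : lam < s) :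
    ∃ R, Res K s R := by
  have hs0 : 0 < s := h0.trans hs
  obtain ⟨Q, hQ, h1, h2⟩ := neumann (hK.smul (inv_nonneg.2 hs0.le)) (summableE K h0 hs hlam)
  exact ⟨s⁻¹ • Q, hQ.smul (inv_nonneg.2 hs0.le), algF hs0.ne' h1 h2⟩

lemma res_le {K : (T →ᵇ ℝ) →L[ℝ] (T →ᵇ ℝ)} (hK : Pos K) {lam : ℝ}
    (hlam : Tendsto (fun n : ℕ => ‖K ^ n‖ ^ (1 / (n : ℝ))) atTop (𝓝 lam)) {s : ℝ} (hs : 0 < s)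
    {R} (hR : Res K s R) : lam ≤ s := by
  obtain ⟨hp, -, h2⟩ := hR
  set u := R 1 with hu
  have h1 : (0 : T →ᵇ ℝ) ≤ 1 := fun x => zero_le_one
  have hu0 : 0 ≤ u := hp _ h1
  have hu1 : s • u - K u = 1 := by
    have := congrArg (fun A : (T →ᵇ ℝ) →L[ℝ] (T →ᵇ ℝ) => A 1) h2
    simpa using this
  have hKu : K u ≤ s • u := by
    rw [← sub_nonneg, hu1]; exact h1
  have h1u : (1 : T →ᵇ ℝ) ≤ s • u := by
    rw [← hu1]; exact sub_le_self _ (hK _ hu0)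
  have hpw : ∀ n : ℕ, (K ^ n) u ≤ s ^ n • u := by
    intro n
    induction n with
    | zero => simp
    | succ n ih =>
      have := hK.mono ih
      rw [pow_succ']
      refine this.trans ?_
      rw [map_smul, pow_succ, mul_smul]
      exact smul_le (by positivity) hKu
  have hb : ∀ n : ℕ, ‖K ^ n‖ ≤ s ^ n * (s * ‖u‖) := by
    intro n
    have hle : (K ^ n) 1 ≤ s ^ n • s • u := by
      refine ((hK.pow n).mono h1u).trans ?_
      rw [map_smul, smul_comm]
      exact smul_le hs.le (hpw n)
    have h0 : 0 ≤ (K ^ n) 1 := hK.pow n _ h1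
    refine (hK.pow n).norm_le.trans ((norm_le_of_abs hle ?_).trans ?_)
    · exact (neg_nonpos.2 h0).trans (h0.trans hle)
    · rw [norm_smul, norm_smul, norm_pow, Real.norm_of_nonneg hs.le]
  set C := s * ‖u‖ + 1
  have hC : 0 < C := by positivity
  have hlim : Tendsto (fun n : ℕ => s * C ^ (1 / (n : ℝ))) atTop (𝓝 (s * C ^ (0 : ℝ))) := by
    refine Tendsto.const_mul _ ?_
    exact (Real.continuousAt_const_rpow hC.ne').tendsto.comp tendsto_one_div_atTop_nhds_zero_nat
  rw [Real.rpow_zero, mul_one] at hlim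
  refine le_of_tendsto_of_tendsto hlam hlim ?_
  filter_upwards [eventually_gt_atTop 0] with n hn
  have hn' : (n : ℝ) ≠ 0 := by positivity
  calc ‖K ^ n‖ ^ (1 / (n : ℝ)) ≤ (s ^ n * C) ^ (1 / (n : ℝ)) := by
        gcongr
        refine (hb n).trans ?_
        gcongr
        simp [C]
    _ = s * C ^ (1 / (n : ℝ)) := by
        rw [Real.mul_rpow (by positivity) hC.le, ← Real.rpow_natCast, ← Real.rpow_mul hs.le,
          mul_one_div_cancel hn', Real.rpow_one]

lemma res_shift {K : (T →ᵇ ℝ) →L[ℝ] (T →ᵇ ℝ)} {s d : ℝ} {R} (hR : Res K s R) (hd : 0 ≤ d)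
    (h : d * ‖R‖ < 1) : ∃ R', Res K (s - d) R' := by
  obtain ⟨hp, h1, h2⟩ := hR
  obtain ⟨Q, hQ, q1, q2⟩ := neumann (hp.smul hd) (summableE' R hd h)
  exact ⟨Q * R, hQ.mul hp, algF' h1 h2 q1 q2⟩

lemma blowup {K : (T →ᵇ ℝ) →L[ℝ] (T →ᵇ ℝ)} (hK : Pos K) {lam : ℝ}
    (hlam : Tendsto (fun n : ℕ => ‖K ^ n‖ ^ (1 / (n : ℝ))) atTop (𝓝 lam)) {e : ℝ}
    (he : 0 < e) (he' : e < lam) {R} (hR : Res K (lam + e) R) : 1 ≤ 2 * e * ‖R 1‖ := by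
  by_contra! h
  have : 2 * e * ‖R‖ < 1 := lt_of_le_of_lt (by gcongr; exact hR.1.norm_le) h
  obtain ⟨R', hR'⟩ := res_shift hR (by positivity) this
  have := res_le hK hlam (by linarith) hR'
  linarith

lemma exists_seq {K : (T →ᵇ ℝ) →L[ℝ] (T →ᵇ ℝ)} (hK : Pos K) {lam : ℝ} (h0 : 0 < lam)
    (hlam : Tendsto (fun n : ℕ => ‖K ^ n‖ ^ (1 / (n : ℝ))) atTop (𝓝 lam)) :
    ∃ (e : ℕ → ℝ) (R : ℕ → (T →ᵇ ℝ) →L[ℝ] (T →ᵇ ℝ)), Tendsto e atTop (𝓝 0) ∧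
      ∀ n, 0 < e n ∧ Res K (lam + e n) (R n) ∧ 1 ≤ 2 * e n * ‖R n 1‖ := by
  have he : ∀ n : ℕ, 0 < lam / ((n : ℝ) + 2) := fun n => by positivity
  have he' : ∀ n : ℕ, lam / ((n : ℝ) + 2) < lam := fun n => by
    apply div_lt_self h0
    have : (0 : ℝ) ≤ n := by positivity
    linarith
  choose R hR using fun n : ℕ => res_gt hK h0 hlam (lt_add_of_pos_right lam (he n))
  refine ⟨fun n => lam / ((n : ℝ) + 2), R, ?_, fun n => ⟨he n, hR n, ?_⟩⟩
  · exact tendsto_const_nhds.div_atTop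
      (tendsto_atTop_add_const_right _ _ tendsto_natCast_atTop_atTop)
  · exact blowup hK hlam (he n) (he' n) (hR n)

lemma pow_sub_tendsto {E : Type*} [NormedAddCommGroup E] [NormedSpace ℝ E]
    (K : E →L[ℝ] E) (lam : ℝ) (f : ℕ → E)
    (h : Tendsto (fun n => K (f n) - lam • f n) atTop (𝓝 0)) (k : ℕ) :
    Tendsto (fun n => (K ^ k) (f n) - lam ^ k • f n) atTop (𝓝 0) := by
  induction k with
  | zero => simp
  | succ k ih =>
    have h1 := ((K.continuous.tendsto 0).comp ih).add (h.const_smul (lam ^ k))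
    rw [map_zero, smul_zero, add_zero] at h1
    refine h1.congr fun n => ?_
    simp only [Function.comp, map_sub, map_smul, smul_sub, pow_succ' K, pow_succ lam, mul_smul,
      ContinuousLinearMap.mul_apply]
    abel

lemma compactE {E : Type*} [NormedAddCommGroup E] [NormedSpace ℝ E]
    (K : E →L[ℝ] E) {lam : ℝ} (h0 : 0 < lam) (f : ℕ → E) (hf : ∀ n, ‖f n‖ = 1)
    (h : Tendsto (fun n => K (f n) - lam • f n) atTop (𝓝 0)) (k : ℕ)
    (hc : IsCompactOperator (⇑(K ^ k))) :
    ∃ (φ : ℕ → ℕ) (ψ : E), Tendsto (f ∘ φ) atTop (𝓝 ψ) ∧ ‖ψ‖ = 1 ∧ K ψ = lam • ψ := by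
  obtain ⟨C, hC, hsub⟩ := IsCompactOperator.image_closedBall_subset_compact
    (f := ((K ^ k : E →L[ℝ] E) : E →ₗ[ℝ] E)) hc 1
  obtain ⟨a, -, φ, hφ, ha⟩ := hC.tendsto_subseq (x := fun n => (K ^ k) (f n))
    (fun n => hsub ⟨f n, by simp [hf n], rfl⟩)
  have hφ' := hφ.tendsto_atTop
  have h1 := (ha.sub ((pow_sub_tendsto K lam f h k).comp hφ')).const_smul ((lam ^ k)⁻¹)
  have h2 : Tendsto (f ∘ φ) atTop (𝓝 ((lam ^ k)⁻¹ • (a - 0))) := by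
    refine h1.congr fun n => ?_
    simp [smul_smul, h0.ne']
  set ψ := (lam ^ k)⁻¹ • (a - 0)
  refine ⟨φ, ψ, h2, ?_, ?_⟩
  · refine tendsto_nhds_unique h2.norm ?_
    simp [hf]
  · have h3 := ((K.continuous.tendsto ψ).comp h2).sub (h2.const_smul lam)
    have := tendsto_nhds_unique h3 (h.comp hφ')
    exact sub_eq_zero.1 this

lemma res_apply {K R : (T →ᵇ ℝ) →L[ℝ] (T →ᵇ ℝ)} {s : ℝ} (hR : Res K s R) (g : T →ᵇ ℝ) :
    s • R g - K (R g) = g := by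
  simpa using congrArg (fun A : (T →ᵇ ℝ) →L[ℝ] (T →ᵇ ℝ) => A g) hR.2.2

lemma res_apply' {K R : (T →ᵇ ℝ) →L[ℝ] (T →ᵇ ℝ)} {s : ℝ} (hR : Res K s R) (g : T →ᵇ ℝ) :
    s • R g - R (K g) = g := by
  simpa using congrArg (fun A : (T →ᵇ ℝ) →L[ℝ] (T →ᵇ ℝ) => A g) hR.2.1

lemma one_nonneg : (0 : T →ᵇ ℝ) ≤ 1 := fun _ => zero_le_one

lemma part_one {K : (T →ᵇ ℝ) →L[ℝ] (T →ᵇ ℝ)} (hK : Pos K) {lam : ℝ} (h0 : 0 < lam)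
    (hlam : Tendsto (fun n : ℕ => ‖K ^ n‖ ^ (1 / (n : ℝ))) atTop (𝓝 lam)) (k : ℕ)
    (hc : IsCompactOperator (⇑(K ^ k))) :
    ∃ ψ : T →ᵇ ℝ, (∀ x, 0 ≤ ψ x) ∧ ψ ≠ 0 ∧ K ψ = lam • ψ := by
  obtain ⟨e, R, he, h⟩ := exists_seq hK h0 hlam
  have hu : ∀ n, 0 < ‖R n 1‖ := by
    intro n
    obtain ⟨h1, -, h2⟩ := h n
    by_contra! h3
    have := le_antisymm h3 (norm_nonneg _)
    rw [this] at h2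
    norm_num at h2
  have hone : ‖(1 : T →ᵇ ℝ)‖ ≤ 1 := by
    rw [BoundedContinuousFunction.norm_le zero_le_one]; intro x; simp
  set f : ℕ → T →ᵇ ℝ := fun n => ‖R n 1‖⁻¹ • R n 1 with hf
  have hf1 : ∀ n, ‖f n‖ = 1 := fun n => by
    rw [hf]; simp only [norm_smul, norm_inv, norm_norm]; exact inv_mul_cancel₀ (hu n).ne'
  have hf2 : ∀ n, K (f n) - lam • f n = e n • f n - ‖R n 1‖⁻¹ • (1 : T →ᵇ ℝ) := fun n => by
    have h3 := res_apply (h n).2.1 1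
    have h4 : K (R n 1) = (lam + e n) • R n 1 - 1 := by
      rw [sub_eq_iff_eq_add.1 h3, add_sub_cancel_left]
    simp only [hf, map_smul, h4, smul_sub, add_smul, smul_add, smul_comm lam, smul_comm (e n)]
    abel
  have hf3 : Tendsto (fun n => K (f n) - lam • f n) atTop (𝓝 0) := by
    refine squeeze_zero_norm (a := fun n => 3 * e n) (fun n => ?_) (by simpa using he.const_mul 3)
    obtain ⟨h1, -, h2⟩ := h n
    rw [hf2]
    refine (norm_sub_le _ _).trans ?_
    rw [norm_smul, hf1, Real.norm_of_nonneg h1.le, norm_smul, norm_inv, norm_norm]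
    have : ‖R n 1‖⁻¹ ≤ 2 * e n := by
      rw [inv_le_iff_one_le_mul₀ (hu n)]; exact h2
    have : ‖R n 1‖⁻¹ * ‖(1 : T →ᵇ ℝ)‖ ≤ 2 * e n * 1 := by gcongr
    linarith
  obtain ⟨φ, ψ, h1, h2, h3⟩ := compactE K h0 f hf1 hf3 k hc
  refine ⟨ψ, ?_, ?_, h3⟩
  · refine (nonneg_iff ψ).1 (isClosed_nonneg.mem_of_tendsto h1 (Eventually.of_forall fun n => ?_))
    intro x
    exact mul_nonneg (inv_nonneg.2 (norm_nonneg _)) ((h (φ n)).2.1.1 _ one_nonneg x)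
  · rintro rfl
    simp at h2

lemma part_two {E : Type*} [NormedAddCommGroup E] [NormedSpace ℝ E]
    (K : E →L[ℝ] E) {lam : ℝ}
    (hlam : Tendsto (fun n : ℕ => ‖K ^ n‖ ^ (1 / (n : ℝ))) atTop (𝓝 lam))
    (t : ℝ) (ψ : E) (hψ : ψ ≠ 0) (h : K ψ = t • ψ) : |t| ≤ lam := by
  refine ge_of_tendsto hlam ?_
  filter_upwards [eventually_gt_atTop 0] with n hn
  have hn' : (n : ℝ) ≠ 0 := by positivity
  have hp : ∀ n : ℕ, (K ^ n) ψ = t ^ n • ψ := by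
    intro n
    induction n with
    | zero => simp
    | succ n ih => rw [pow_succ', ContinuousLinearMap.mul_apply, ih, map_smul, h, pow_succ, mul_smul]
  have h1 : |t| ^ n ≤ ‖K ^ n‖ := by
    have := (K ^ n).le_opNorm ψ
    rw [hp, norm_smul, norm_pow, Real.norm_eq_abs] at this
    exact le_of_mul_le_mul_right this (norm_pos_iff.2 hψ)
  calc |t| = (|t| ^ n) ^ (1 / (n : ℝ)) := by
        rw [← Real.rpow_natCast, ← Real.rpow_mul (abs_nonneg _), mul_one_div_cancel hn',
          Real.rpow_one]
    _ ≤ _ := by gcongr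

lemma part_three {K : (T →ᵇ ℝ) →L[ℝ] (T →ᵇ ℝ)} (hK : Pos K) {lam : ℝ} (h0 : 0 < lam)
    (hlam : Tendsto (fun n : ℕ => ‖K ^ n‖ ^ (1 / (n : ℝ))) atTop (𝓝 lam)) :
    ∃ m : (T →ᵇ ℝ) →L[ℝ] ℝ, m ≠ 0 ∧ (∀ f : T →ᵇ ℝ, (∀ x, 0 ≤ f x) → 0 ≤ m f) ∧
      ∀ f : T →ᵇ ℝ, m (K f) = lam * m f := by
  obtain ⟨e, R, he, h⟩ := exists_seq hK h0 hlam
  have hx : ∀ n, ∃ x, 1 < 4 * e n * R n 1 x := by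
    intro n
    obtain ⟨h1, h3, h2⟩ := h n
    by_contra! hx
    have : ‖R n 1‖ ≤ 1 / (4 * e n) := by
      rw [BoundedContinuousFunction.norm_le (by positivity)]
      intro x
      have hx0 : 0 ≤ R n 1 x := h3.1 _ one_nonneg x
      rw [Real.norm_of_nonneg hx0, le_div_iff₀ (by positivity), mul_comm]
      exact hx x
    rw [le_div_iff₀ (by positivity)] at this
    linarith
  choose x hx using hx
  have hpos : ∀ n, 0 < R n 1 (x n) := fun n => by
    have h1 := (h n).1
    have := hx n
    by_contra! h3
    have : 4 * e n * R n 1 (x n) ≤ 0 := mul_nonpos_of_nonneg_of_nonpos (by positivity) h3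
    linarith
  -- the approximating normalized positive functionals
  set μ : ℕ → (T →ᵇ ℝ) → ℝ := fun n f => R n f (x n) / R n 1 (x n) with hμ
  have hadd : ∀ n f g, μ n (f + g) = μ n f + μ n g := fun n f g => by
    simp [hμ, add_div]
  have hsmul : ∀ n (c : ℝ) f, μ n (c • f) = c * μ n f := fun n c f => by
    simp [hμ, mul_div_assoc]
  have hnn : ∀ n f, 0 ≤ f → 0 ≤ μ n f := fun n f hf =>
    div_nonneg ((h n).2.1.1 f hf (x n)) (hpos n).le
  have hone : ∀ n, μ n 1 = 1 := fun n => div_self (hpos n).ne'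
  have hup : ∀ n f, μ n f ≤ ‖f‖ := fun n f => by
    have h1 := (h n).2.1.1.mono (le_norm_smul_one f) (x n)
    rw [map_smul] at h1
    exact (div_le_iff₀ (hpos n)).2 h1
  have hbd : ∀ n f, |μ n f| ≤ ‖f‖ := fun n f => by
    refine abs_le'.2 ⟨hup n f, ?_⟩
    have h1 := hup n (-f)
    have h2 := hsmul n (-1) f
    rw [show (-1 : ℝ) • f = -f from neg_one_smul ℝ f] at h2
    rw [h2, norm_neg] at h1
    linarith
  have hK2 : ∀ n f, |μ n (K f) - lam * μ n f| ≤ 5 * ‖f‖ * e n := fun n f => by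
    have h1 := congrArg (fun g : T →ᵇ ℝ => g (x n)) (res_apply' (h n).2.1 f)
    have h2 : (lam + e n) * R n f (x n) - R n (K f) (x n) = f (x n) := h1
    have h3 : μ n (K f) - lam * μ n f = e n * μ n f - f (x n) * (R n 1 (x n))⁻¹ := by
      simp only [hμ, ← h2]; field_simp; ring
    rw [h3]
    refine (abs_sub _ _).trans ?_
    have he0 := (h n).1
    rw [abs_mul, abs_mul, abs_of_pos he0, abs_of_pos (inv_pos.2 (hpos n))]
    have h4 : (R n 1 (x n))⁻¹ ≤ 4 * e n := by
      rw [inv_le_iff_one_le_mul₀ (hpos n)]; exact (hx n).le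
    have h5 : |f (x n)| * (R n 1 (x n))⁻¹ ≤ ‖f‖ * (4 * e n) := by
      exact mul_le_mul (f.norm_coe_le_norm (x n)) h4 (inv_nonneg.2 (hpos n).le) (norm_nonneg _)
    have h6 : e n * |μ n f| ≤ e n * ‖f‖ := by
      gcongr
      exact hbd n f
    linarith
  -- the limit along an ultrafilter
  let U : Ultrafilter ℕ := hyperfilter ℕ
  have hU : (U : Filter ℕ) ≤ atTop := Nat.hyperfilter_le_atTop
  have hl : ∀ f, ∃ y, Tendsto (fun n => μ n f) U (𝓝 y) := fun f => by
    obtain ⟨y, -, hy⟩ := (isCompact_Icc (a := -‖f‖) (b := ‖f‖)).ultrafilter_le_nhds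
      (U.map fun n => μ n f) (by
        rw [Ultrafilter.coe_map, le_principal_iff, mem_map]
        exact Filter.univ_mem' fun n => abs_le.1 (hbd n f))
    exact ⟨y, hy⟩
  choose m hm using hl
  let M : (T →ᵇ ℝ) →ₗ[ℝ] ℝ :=
    { toFun := m
      map_add' := fun f g => tendsto_nhds_unique (hm _)
        (((hm f).add (hm g)).congr fun n => (hadd n f g).symm)
      map_smul' := fun c f => tendsto_nhds_unique (hm _)
        (((hm f).const_mul c).congr fun n => (hsmul n c f).symm) }
  refine ⟨M.mkContinuous 1 fun f => ?_, ?_, fun f hf => ?_, fun f => ?_⟩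
  · rw [one_mul]
    exact le_of_tendsto (hm f).norm (Eventually.of_forall fun n => hbd n f)
  · intro hM
    have h1 : m 1 = 0 := congrArg (fun A : (T →ᵇ ℝ) →L[ℝ] ℝ => A 1) hM
    have h2 := tendsto_nhds_unique (hm 1) (tendsto_const_nhds.congr fun n => (hone n).symm)
    rw [h1] at h2
    exact zero_ne_one h2
  · exact ge_of_tendsto (hm f) (Eventually.of_forall fun n => hnn n f hf)
  · have h1 := (hm (K f)).sub ((hm f).const_mul lam)
    have h2 : Tendsto (fun n => μ n (K f) - lam * μ n f) U (𝓝 0) :=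
      squeeze_zero_norm (fun n => hK2 n f) (by simpa using (he.mono_left hU).const_mul (5 * ‖f‖))
    exact sub_eq_zero.1 (tendsto_nhds_unique h1 h2)

end KR

/-- Let `S` be a Borel subset of a Polish space and `K` a bounded linear
operator on `C_b(S)` which is non-negative, such that `K^k` is compact for some `k ≥ 1` and
whose spectral radius `λ(K)` is positive. Then: (i) `λ(K)` admits a non-negative, nonzero
continuous bounded eigenfunction; (ii) every real eigenvalue `t` of `K` satisfies
`|t| ≤ λ(K)`; (iii) there is a nonzero positive continuous linear functional `m` on `C_b(S)`
with `m ∘ K = λ(K) · m`. -/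
theorem krein_rutman_persistence
    {X : Type*} [TopologicalSpace X] [PolishSpace X]
    [MeasurableSpace X] [BorelSpace X]
    (S : Set X) (hS : MeasurableSet S)
    (K : (S →ᵇ ℝ) →L[ℝ] (S →ᵇ ℝ))
    (hpos : ∀ g : S →ᵇ ℝ, (∀ x, 0 ≤ g x) → ∀ x, 0 ≤ (K g) x)
    (k : ℕ) (hk : 1 ≤ k) (hcompact : IsCompactOperator (⇑(K ^ k)))
    (lam : ℝ)
    (hlam : Tendsto (fun n : ℕ => ‖K ^ n‖ ^ (1 / (n : ℝ))) atTop (𝓝 lam))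
    (hlam_pos : 0 < lam) :
    (∃ ψ : S →ᵇ ℝ, (∀ x, 0 ≤ ψ x) ∧ ψ ≠ 0 ∧ K ψ = lam • ψ) ∧
    (∀ t : ℝ, (∃ ψ : S →ᵇ ℝ, ψ ≠ 0 ∧ K ψ = t • ψ) → |t| ≤ lam) ∧
    (∃ m : (S →ᵇ ℝ) →L[ℝ] ℝ, m ≠ 0 ∧ (∀ f : S →ᵇ ℝ, (∀ x, 0 ≤ f x) → 0 ≤ m f) ∧
      ∀ f : S →ᵇ ℝ, m (K f) = lam * m f) := by
  have hK : KR.Pos K := fun g hg x => hpos g hg x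
  exact ⟨KR.part_one hK hlam_pos hlam k hcompact,
    fun t ⟨ψ, h1, h2⟩ => KR.part_two K hlam t ψ h1 h2,
    KR.part_three hK hlam_pos hlam⟩
end

section
/- Let ξ be a real random variable whose law has a density φ with respect to Lebesgue measure that is strictly positive on all of ℝ and log-concave (x ↦ log φ(x) is concave on ℝ). Then for every δ ≥ 0 and every bounded non-decreasing function g : ℝ → ℝ, E[g(ξ+δ)·1{ξ+δ > 0}] / P(ξ+δ > 0) ≥ E[g(ξ)·1{ξ > 0}] / P(ξ > 0); both probabilities are strictly positive because φ > 0 everywhere. -/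
open MeasureTheory

lemma aux_logconcave (φ : ℝ → ℝ) (hφpos : ∀ x, 0 < φ x)
    (hφconc : ConcaveOn ℝ Set.univ (fun x => Real.log (φ x)))
    (δ : ℝ) (hδ : 0 ≤ δ) (x y : ℝ) (hxy : x ≤ y) :
    φ (x - δ) * φ y ≤ φ (y - δ) * φ x := by
  rcases hδ.eq_or_lt with h0 | h0
  · subst h0; simp [mul_comm]
  have hd : 0 < y - x + δ := by linarith
  have hs : (y - x) / (y - x + δ) + δ / (y - x + δ) = 1 := by field_simp
  have hs0 : 0 ≤ (y - x) / (y - x + δ) := div_nonneg (by linarith) hd.le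
  have ht0 : 0 ≤ δ / (y - x + δ) := div_nonneg hδ hd.le
  have h1 := hφconc.2 (Set.mem_univ (x - δ)) (Set.mem_univ y) hs0 ht0 hs
  have h2 := hφconc.2 (Set.mem_univ (x - δ)) (Set.mem_univ y) ht0 hs0 (by linarith)
  have e1 : (y - x) / (y - x + δ) * (x - δ) + δ / (y - x + δ) * y = x := by
    field_simp; ring
  have e2 : δ / (y - x + δ) * (x - δ) + (y - x) / (y - x + δ) * y = y - δ := by
    field_simp; ring
  simp only [smul_eq_mul] at h1 h2
  rw [e1] at h1
  rw [e2] at h2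
  generalize (y - x) / (y - x + δ) = s at *
  generalize δ / (y - x + δ) = t at *
  have ht : t = 1 - s := by linarith
  subst ht
  have := hφpos x
  have := hφpos y
  have := hφpos (x - δ)
  have := hφpos (y - δ)
  rw [← Real.log_le_log_iff (by positivity) (by positivity),
    Real.log_mul (by positivity) (by positivity), Real.log_mul (by positivity) (by positivity)]
  linarith

lemma aux_transfer {Ω : Type*} [MeasurableSpace Ω] (P : Measure Ω)
    (ξ : Ω → ℝ) (hξ : Measurable ξ)
    (φ : ℝ → ℝ) (hφpos : ∀ x, 0 < φ x) (hφm : Measurable φ)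
    (hlaw : P.map ξ = MeasureTheory.volume.withDensity (fun y => ENNReal.ofReal (φ y)))
    (δ : ℝ) (g : ℝ → ℝ) (hg : Measurable g) :
    ∫ ω in {ω | 0 < ξ ω + δ}, g (ξ ω + δ) ∂P = ∫ x in Set.Ioi 0, φ (x - δ) * g x := by
  have hS : MeasurableSet {ω | 0 < ξ ω + δ} :=
    measurableSet_lt measurable_const (hξ.add_const δ)
  have hF : Measurable (fun y : ℝ => (Set.Ioi (0:ℝ)).indicator g (y + δ)) :=
    (hg.indicator measurableSet_Ioi).comp (measurable_id.add_const δ)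
  rw [← integral_indicator hS]
  have h1 : ∫ ω, ({ω | 0 < ξ ω + δ}).indicator (fun ω => g (ξ ω + δ)) ω ∂P
      = ∫ ω, (fun y : ℝ => (Set.Ioi (0:ℝ)).indicator g (y + δ)) (ξ ω) ∂P := by
    congr 1
  rw [h1, ← integral_map hξ.aemeasurable hF.aestronglyMeasurable, hlaw,
    integral_withDensity_eq_integral_toReal_smul hφm.ennreal_ofReal (by simp),
    ← integral_indicator measurableSet_Ioi,
    ← integral_add_right_eq_self
      ((Set.Ioi (0:ℝ)).indicator fun x => φ (x - δ) * g x) δ]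
  congr 1
  ext y
  by_cases h : 0 < y + δ
  · simp [Set.indicator, h, ENNReal.toReal_ofReal (hφpos y).le]
  · simp [Set.indicator, h]

lemma aux_cross (a b g : ℝ → ℝ) (ha : ∀ x, 0 < a x)
    (hab : ∀ x y, x ≤ y → b x * a y ≤ b y * a x)
    (hai : Integrable a) (hbi : Integrable b)
    (hg : Monotone g) (C : ℝ) (hC : ∀ x, |g x| ≤ C)
    (hA : 0 < ∫ x in Set.Ioi (0:ℝ), a x) :
    (∫ x in Set.Ioi (0:ℝ), a x * g x) * (∫ x in Set.Ioi (0:ℝ), b x)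
      ≤ (∫ x in Set.Ioi (0:ℝ), b x * g x) * (∫ x in Set.Ioi (0:ℝ), a x) := by
  set A := ∫ x in Set.Ioi (0:ℝ), a x
  set B := ∫ x in Set.Ioi (0:ℝ), b x
  obtain ⟨k, hk1, hk2⟩ : ∃ k, (∀ x, A * b x - B * a x < 0 → g x ≤ k) ∧
      (∀ x, 0 < A * b x - B * a x → k ≤ g x) := by
    have hbdd : BddAbove (insert (-C) (g '' {x | A * b x - B * a x < 0})) := by
      refine BddAbove.insert _ ⟨C, ?_⟩
      rintro _ ⟨x, -, rfl⟩
      exact (abs_le.1 (hC x)).2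
    refine ⟨sSup (insert (-C) (g '' {x | A * b x - B * a x < 0})), fun x hx => ?_, fun x hx => ?_⟩
    · exact le_csSup hbdd (Set.mem_insert_of_mem _ ⟨x, hx, rfl⟩)
    · refine csSup_le (Set.insert_nonempty _ _) ?_
      rintro _ (rfl | ⟨y, hy, rfl⟩)
      · exact (abs_le.1 (hC x)).1
      · apply hg
        by_contra! hlt
        have h := hab x y hlt.le
        have hy : A * b y - B * a y < 0 := hy
        have e1 : B * a x * a y < A * b x * a y := by
          exact mul_lt_mul_of_pos_right (by linarith) (ha y)
        have e2 : A * b y * a x < B * a y * a x := by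
          exact mul_lt_mul_of_pos_right (by linarith) (ha x)
        have e3 := mul_le_mul_of_nonneg_left h hA.le
        linarith
  have hag : Integrable (fun x => a x * g x) :=
    hai.mul_bdd (c := C) hg.measurable.aestronglyMeasurable (Filter.Eventually.of_forall hC)
  have hbg : Integrable (fun x => b x * g x) :=
    hbi.mul_bdd (c := C) hg.measurable.aestronglyMeasurable (Filter.Eventually.of_forall hC)
  have hnn : 0 ≤ ∫ x in Set.Ioi (0:ℝ),
      ((A * (b x * g x) - B * (a x * g x)) - (k * A * b x - k * B * a x)) := by
    apply integral_nonneg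
    intro x
    have : (A * (b x * g x) - B * (a x * g x)) - (k * A * b x - k * B * a x)
      = (A * b x - B * a x) * (g x - k) := by ring
    simp only [Pi.zero_apply, this]
    rcases lt_trichotomy (A * b x - B * a x) 0 with h | h | h
    · exact mul_nonneg_of_nonpos_of_nonpos h.le (by linarith [hk1 x h])
    · simp [h]
    · exact mul_nonneg h.le (by linarith [hk2 x h])
  have i1 := (hbg.const_mul A).integrableOn (s := Set.Ioi 0)
  have i2 := (hag.const_mul B).integrableOn (s := Set.Ioi 0)
  have i3 := (hbi.const_mul (k * A)).integrableOn (s := Set.Ioi 0)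
  have i4 := (hai.const_mul (k * B)).integrableOn (s := Set.Ioi 0)
  have e := integral_sub (i1.sub i2) (i3.sub i4)
  simp only [Pi.sub_apply] at e
  rw [e, integral_sub i1 i2, integral_sub i3 i4,
    integral_const_mul, integral_const_mul, integral_const_mul, integral_const_mul] at hnn
  change 0 ≤ A * _ - B * _ - (k * A * B - k * B * A) at hnn
  linarith


/-- Let `ξ` have a strictly positive log-concave density `φ` on `ℝ`.
Then for every `δ ≥ 0` and every bounded non-decreasing `g : ℝ → ℝ`,
`E[g(ξ+δ) | ξ+δ > 0] ≥ E[g(ξ) | ξ > 0]`; both conditioning probabilities are strictly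
positive. -/
theorem logconcave_conditional_monotonicity
    {Ω : Type*} [MeasurableSpace Ω] (P : Measure Ω) [IsProbabilityMeasure P]
    (ξ : Ω → ℝ) (hξ : Measurable ξ)
    (φ : ℝ → ℝ) (hφpos : ∀ x, 0 < φ x)
    (hφconc : ConcaveOn ℝ Set.univ (fun x => Real.log (φ x)))
    (hlaw : P.map ξ = MeasureTheory.volume.withDensity (fun y => ENNReal.ofReal (φ y)))
    (δ : ℝ) (hδ : 0 ≤ δ)
    (g : ℝ → ℝ) (hg : Monotone g) (hgb : ∃ C : ℝ, ∀ x, |g x| ≤ C) :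
    0 < (P {ω | 0 < ξ ω + δ}).toReal ∧ 0 < (P {ω | 0 < ξ ω}).toReal ∧
    (∫ ω in {ω | 0 < ξ ω}, g (ξ ω) ∂P) / (P {ω | 0 < ξ ω}).toReal ≤
      (∫ ω in {ω | 0 < ξ ω + δ}, g (ξ ω + δ) ∂P) / (P {ω | 0 < ξ ω + δ}).toReal := by
  obtain ⟨C, hC⟩ := hgb
  have hφm : Measurable φ := by
    have h1 : ContinuousOn (fun x => Real.log (φ x)) Set.univ := hφconc.continuousOn isOpen_univ
    have h2 : Continuous (fun x => Real.log (φ x)) := continuousOn_univ.1 h1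
    have h3 : φ = fun x => Real.exp (Real.log (φ x)) := by
      ext x; rw [Real.exp_log (hφpos x)]
    rw [h3]
    exact (Real.continuous_exp.comp h2).measurable
  have hφi : Integrable φ := by
    refine ⟨hφm.aestronglyMeasurable, ?_⟩
    rw [hasFiniteIntegral_iff_ofReal (Filter.Eventually.of_forall fun x => (hφpos x).le)]
    have h : (P.map ξ) Set.univ = ∫⁻ y, ENNReal.ofReal (φ y) := by
      rw [hlaw, withDensity_apply _ MeasurableSet.univ, Measure.restrict_univ]
    rw [← h, Measure.map_apply hξ MeasurableSet.univ]
    exact measure_lt_top _ _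
  have hφdi : Integrable (fun x => φ (x - δ)) := hφi.comp_sub_right δ
  have hpos : ∀ f : ℝ → ℝ, (∀ x, 0 < f x) → Integrable f → 0 < ∫ x in Set.Ioi (0:ℝ), f x := by
    intro f hf hfi
    rw [setIntegral_pos_iff_support_of_nonneg_ae (Filter.Eventually.of_forall fun x => (hf x).le)
      hfi.integrableOn]
    have : Function.support f = Set.univ := by
      ext x; simp [(hf x).ne']
    simp [this]
  have hprob : ∀ d : ℝ, (P {ω | 0 < ξ ω + d}).toReal = ∫ x in Set.Ioi (0:ℝ), φ (x - d) := by
    intro d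
    have h := aux_transfer P ξ hξ φ hφpos hφm hlaw d (fun _ => 1) measurable_const
    simpa [Measure.real] using h
  have hprob0 := hprob 0
  have hint0 := aux_transfer P ξ hξ φ hφpos hφm hlaw 0 g hg.measurable
  have hintd := aux_transfer P ξ hξ φ hφpos hφm hlaw δ g hg.measurable
  simp only [add_zero, sub_zero] at hprob0 hint0
  have hA := hpos φ hφpos hφi
  have hB := hpos _ (fun x => hφpos (x - δ)) hφdi
  rw [hprob0, hint0, hprob δ, hintd]
  refine ⟨hB, hA, ?_⟩
  rw [div_le_div_iff₀ hA hB]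
  exact aux_cross φ (fun x => φ (x - δ)) g hφpos
    (fun x y hxy => aux_logconcave φ hφpos hφconc δ hδ x y hxy) hφi hφdi hg C hC hA
end
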